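/- arXiv:1905.02830 — 3 statements merged into one kernel-verified Lean document; each statement's English description precedes it below -/
import Mathlib

section
/- Let P be a row-stochastic n×n matrix on state space {1,…,n} (n ≥ 2) defining an irreducible Markov chain. Let h ∈ ℝ^{n−1} be the unique vector of mean hitting times to state 1 from states j ∈ {2,…,n}, i.e. the unique solution of h(j) = 1 + Σ_{k=2}^{n} p(j,k) h(k) for all j ∈ {2,…,n}, and set μ₁ = 1 + Σ_{k=2}^{n} p(1,k) h(k) (the mean return time to state 1). For each i let cᵢ ≥ 0 with cᵢ ≤ p(i,2), with cᵢ₀ > 0 for at least one i₀, and let P̂ be given by p̂(i,1) = p(i,1) + cᵢ, p̂(i,2) = p(i,2) − cᵢ, p̂(i,j) = p(i,j) for j ∉ {1,2}. If P̂ is irreducible, with corresponding hitting-time vector ĥ (the unique solution of ĥ(j) = 1 + Σ_{k=2}^{n} p̂(j,k) ĥ(k) for j ∈ {2,…,n}) and mean return time μ̂₁ = 1 + Σ_{k=2}^{n} p̂(1,k) ĥ(k), then μ̂₁ < μ₁. -/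
/-!
Extend `h` and `hhat` by the value `0` at state `0` and let `d` be the difference of the extensions.
Subtracting the two linear systems gives `d j = ∑ k, Phat j k * d k + c j * h 1` for `j ≠ 0`, while
the difference of the two mean return times equals `e = ∑ k, Phat 0 k * d k + c 0 * h 1`.

The minimum principle for irreducible chains (`nonneg_of_superharmonic_off_zero`) gives `h ≥ 0`,
hence `h 1 ≥ 1`, and then `d ≥ 0`, so that `e ≥ 0`. If `e = 0`, then `d` is superharmonic at state
`0` as well and attains its minimum there, so `d` vanishes identically. The equations for `d`
then read `c j * h 1 = 0` for every `j`, contradicting `c ≠ 0`. Both steps use that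
a set of minimisers at which the function is superharmonic is closed under transitions, and
that a nonempty closed set of an irreducible chain is the whole state space.
-/

/-- A matrix is row-stochastic: nonnegative entries and each row sums to 1. -/
def IsStochastic {n : ℕ} (P : Matrix (Fin n) (Fin n) ℝ) : Prop :=
  (∀ i j, 0 ≤ P i j) ∧ ∀ i, ∑ j, P i j = 1

/-- A matrix is irreducible: for every pair of states there is `m ≥ 1` with `(P^m) i j > 0`. -/
def IsIrreducibleMatrix {n : ℕ} (P : Matrix (Fin n) (Fin n) ℝ) : Prop :=
  ∀ i j, ∃ m : ℕ, 1 ≤ m ∧ 0 < (P ^ m) i j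

/-- `h` is the vector of mean hitting times of state 1 (index `0`) from the states `j ≠ 0`:
it solves `h j = 1 + ∑_{k ≠ 0} P j k * h k` for all `j ≠ 0`. -/
def IsHittingVector {n : ℕ} [NeZero n] (P : Matrix (Fin n) (Fin n) ℝ) (h : Fin n → ℝ) : Prop :=
  ∀ j, j ≠ 0 → h j = 1 + ∑ k ∈ Finset.univ.erase 0, P j k * h k

/-- A nonempty set of states closed under the transitions of an irreducible chain contains every
state. -/
lemma mem_of_closed {n : ℕ} {Q : Matrix (Fin n) (Fin n) ℝ} (hirr : IsIrreducibleMatrix Q)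
    {S : Fin n → Prop} (hS : ∀ i k, S i → Q i k ≠ 0 → S k) {i : Fin n} (hi : S i) (j : Fin n) :
    S j := by
  by_contra hj
  have key : ∀ m : ℕ, ∀ i, S i → (Q ^ m) i j = 0 := by
    intro m
    induction m with
    | zero =>
      intro i hi
      have hij : i ≠ j := fun hij => hj (hij ▸ hi)
      simp [hij]
    | succ m ih =>
      intro i hi
      rw [pow_succ', Matrix.mul_apply]
      refine Finset.sum_eq_zero fun k _ => ?_
      by_cases hk : Q i k = 0
      · simp [hk]
      · simp [ih k (hS i k hi hk)]
  obtain ⟨m, -, hm⟩ := hirr i j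
  exact hm.ne' (key m i hi)

/-- A function that is superharmonic at a state `i` where it is minimal takes the same minimal
value at every state reachable from `i` in one step. -/
lemma eq_min_of_step {n : ℕ} {Q : Matrix (Fin n) (Fin n) ℝ} (hQ : IsStochastic Q)
    {d : Fin n → ℝ} {i k : Fin n} (hmin : ∀ k, d i ≤ d k)
    (hd : ∑ k, Q i k * d k ≤ d i) (hk : Q i k ≠ 0) : d k = d i := by
  have hnn : ∀ k ∈ Finset.univ, 0 ≤ Q i k * (d k - d i) := fun k _ =>
    mul_nonneg (hQ.1 i k) (sub_nonneg.2 (hmin k))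
  have hsum : ∑ k, Q i k * (d k - d i) = 0 := by
    refine le_antisymm ?_ (Finset.sum_nonneg hnn)
    simp only [mul_sub, Finset.sum_sub_distrib, ← Finset.sum_mul, hQ.2 i]
    linarith
  have h0 := (Finset.sum_eq_zero_iff_of_nonneg hnn).1 hsum k (Finset.mem_univ k)
  exact sub_eq_zero.1 ((mul_eq_zero.1 h0).resolve_left hk)

/-- Minimum principle with boundary state `0`. -/
lemma nonneg_of_superharmonic_off_zero {n : ℕ} [NeZero n] {Q : Matrix (Fin n) (Fin n) ℝ}
    (hQ : IsStochastic Q) (hirr : IsIrreducibleMatrix Q) {d : Fin n → ℝ} (h0 : d 0 = 0)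
    (hd : ∀ j, j ≠ 0 → ∑ k, Q j k * d k ≤ d j) (j : Fin n) : 0 ≤ d j := by
  obtain ⟨i, hi⟩ := Finite.exists_min d
  by_contra! hj
  have hneg : d i < 0 := (hi j).trans_lt hj
  have h0i : d 0 = d i := by
    refine mem_of_closed hirr (S := fun k => d k = d i) (fun a k ha hk => ?_) (i := i) rfl 0
    have ha0 : a ≠ 0 := by
      rintro rfl
      linarith
    exact (eq_min_of_step hQ (fun l => ha.le.trans (hi l)) (hd a ha0) hk).trans ha
  linarith

/-- Setting the value at state `0` to zero turns the sums over `k ≠ 0` of the hitting-time system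
into sums over all states. -/
lemma sum_erase_eq_sum_update {n : ℕ} [NeZero n] (a g : Fin n → ℝ) :
    ∑ k ∈ Finset.univ.erase 0, a k * g k = ∑ k, a k * Function.update g 0 0 k := by
  rw [← Finset.sum_erase (s := Finset.univ) (a := 0) (f := fun k => a k * Function.update g 0 0 k)
    (by simp)]
  refine Finset.sum_congr rfl fun k hk => ?_
  rw [Function.update_of_ne (Finset.ne_of_mem_erase hk)]

/-- The paper's core step.  State space `{1, …, n}` with `n ≥ 2` is modelled as `Fin (n+2)`;
state 1 is index `0`, state 2 is index `1`.  Let `h` be the unique hitting-time vector of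
state 1 for `P`, and `hhat` the unique hitting-time vector for the perturbed matrix `P̂`
which moves mass `cᵢ ≥ 0` (not all zero) from column 2 to column 1.  Then the mean return
time to state 1 strictly decreases:
`μ̂₁ = 1 + ∑_{k≠0} P̂ 0 k * ĥ k < 1 + ∑_{k≠0} P 0 k * h k = μ₁`. -/
theorem return_time_decreases_column_shift (n : ℕ)
    (P Phat : Matrix (Fin (n + 2)) (Fin (n + 2)) ℝ)
    (h hhat : Fin (n + 2) → ℝ) (c : Fin (n + 2) → ℝ)
    (hP : IsStochastic P) (hPirr : IsIrreducibleMatrix P)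
    (hh : IsHittingVector P h)
    (hhuniq : ∀ g : Fin (n + 2) → ℝ, IsHittingVector P g → ∀ j, j ≠ 0 → g j = h j)
    (hcnonneg : ∀ i, 0 ≤ c i) (hcle : ∀ i, c i ≤ P i 1)
    (hcpos : ∃ i₀, 0 < c i₀)
    (hPhat1 : ∀ i, Phat i 0 = P i 0 + c i)
    (hPhat2 : ∀ i, Phat i 1 = P i 1 - c i)
    (hPhat3 : ∀ i j, j ≠ 0 → j ≠ 1 → Phat i j = P i j)
    (hPhatirr : IsIrreducibleMatrix Phat)
    (hhhat : IsHittingVector Phat hhat)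
    (hhhatuniq : ∀ g : Fin (n + 2) → ℝ, IsHittingVector Phat g → ∀ j, j ≠ 0 → g j = hhat j) :
    1 + ∑ k ∈ Finset.univ.erase 0, Phat 0 k * hhat k
      < 1 + ∑ k ∈ Finset.univ.erase 0, P 0 k * h k := by
  have h10 : (1 : Fin (n + 2)) ≠ 0 := by simp
  have hrow : ∀ i, ∀ g : Fin (n + 2) → ℝ,
      ∑ k, Phat i k * g k = ∑ k, P i k * g k + c i * g 0 - c i * g 1 := by
    intro i g
    rw [Fin.sum_univ_succ, Fin.sum_univ_succ, Fin.sum_univ_succ (n := n + 1), Fin.sum_univ_succ]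
    have hrest : ∀ k : Fin n, Phat i k.succ.succ = P i k.succ.succ := fun k =>
      hPhat3 i _ (Fin.succ_ne_zero _) (by
        rw [← Fin.succ_zero_eq_one]
        exact fun hk => Fin.succ_ne_zero _ (Fin.succ_injective _ hk))
    simp only [hrest, Fin.succ_zero_eq_one, hPhat1, hPhat2]
    ring
  have hQ : IsStochastic Phat := by
    refine ⟨fun i j => ?_, fun i => ?_⟩
    · by_cases hj0 : j = 0
      · rw [hj0, hPhat1]
        exact add_nonneg (hP.1 i 0) (hcnonneg i)
      by_cases hj1 : j = 1
      · rw [hj1, hPhat2]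
        exact sub_nonneg.2 (hcle i)
      rw [hPhat3 i j hj0 hj1]
      exact hP.1 i j
    · have h1 := hrow i 1
      simp only [Pi.one_apply, mul_one, hP.2 i] at h1
      linarith
  simp only [IsHittingVector, sum_erase_eq_sum_update] at hh hhhat
  rw [sum_erase_eq_sum_update, sum_erase_eq_sum_update]
  have hu : ∀ g : Fin (n + 2) → ℝ, ∀ j, j ≠ 0 → Function.update g 0 0 j = g j :=
    fun g j hj => Function.update_of_ne hj _ _
  have hu0 : Function.update h 0 0 0 = 0 := Function.update_self ..
  have hv0 : Function.update hhat 0 0 0 = 0 := Function.update_self ..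
  replace hh : ∀ j, j ≠ 0 → Function.update h 0 0 j =
      1 + ∑ k, P j k * Function.update h 0 0 k := fun j hj => (hu h j hj).trans (hh j hj)
  replace hhhat : ∀ j, j ≠ 0 → Function.update hhat 0 0 j =
      1 + ∑ k, Phat j k * Function.update hhat 0 0 k :=
    fun j hj => (hu hhat j hj).trans (hhhat j hj)
  -- From here on `u` and `v` are the extensions of `h` and `hhat` by `0` at state `0`.
  generalize Function.update h 0 0 = u at *
  generalize Function.update hhat 0 0 = v at *
  have hunn : ∀ j, 0 ≤ u j := nonneg_of_superharmonic_off_zero hP hPirr hu0 fun j hj => by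
    linarith [hh j hj]
  have hu1 : 0 < u 1 := by
    have hs : 0 ≤ ∑ k, P 1 k * u k := Finset.sum_nonneg fun k _ => mul_nonneg (hP.1 1 k) (hunn k)
    linarith [hh 1 h10]
  have hd : ∀ i, ∑ k, Phat i k * (u - v) k =
      ∑ k, P i k * u k - c i * u 1 - ∑ k, Phat i k * v k := by
    intro i
    simp only [Pi.sub_apply, mul_sub, Finset.sum_sub_distrib, hrow i u, hu0]
    ring
  have hd0 : (u - v) 0 = 0 := by simp [hu0, hv0]
  have hcu : ∀ i, 0 ≤ c i * u 1 := fun i => mul_nonneg (hcnonneg i) hu1.le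
  have hdeq : ∀ j, j ≠ 0 → (u - v) j = ∑ k, Phat j k * (u - v) k + c j * u 1 := by
    intro j hj
    rw [hd, Pi.sub_apply]
    linarith [hh j hj, hhhat j hj]
  have hdnn : ∀ j, 0 ≤ (u - v) j :=
    nonneg_of_superharmonic_off_zero hQ hPhatirr hd0 fun j hj => by
      linarith [hdeq j hj, hcu j]
  have hs0 : 0 ≤ ∑ k, Phat 0 k * (u - v) k :=
    Finset.sum_nonneg fun k _ => mul_nonneg (hQ.1 0 k) (hdnn k)
  by_contra! hcon
  -- Without a strict decrease, the equation for `u - v` extends to state `0`.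
  have hdall : ∀ j, (u - v) j = ∑ k, Phat j k * (u - v) k + c j * u 1 := by
    intro j
    by_cases hj : j = 0
    · subst hj
      linarith [hd 0, hcu 0]
    · exact hdeq j hj
  have hzero : ∀ j, (u - v) j = 0 := by
    refine mem_of_closed hPhatirr (S := fun k => (u - v) k = 0) (fun a k ha hk => ?_) hd0
    exact (eq_min_of_step hQ (fun l => ha.le.trans (hdnn l))
      (by linarith [hdall a, hcu a]) hk).trans ha
  obtain ⟨i, hi⟩ := hcpos
  have hfin := hdall i
  simp only [hzero, mul_zero, Finset.sum_const_zero, zero_add] at hfin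
  exact (mul_pos hi hu1).ne hfin
end

section
/- Let P be a row-stochastic n×n matrix on state space {1,…,n} (n ≥ 2) defining an irreducible Markov chain, with hitting-time vector h ∈ ℝ^{n−1} to state 1 (the unique solution of h(j) = 1 + Σ_{k=2}^{n} p(j,k) h(k) for j ∈ {2,…,n}) and mean return time μ₁ = 1 + Σ_{k=2}^{n} p(1,k) h(k). Fix c with 0 < c ≤ p(1,2) and let P̂ be given by p̂(1,1) = p(1,1) + c, p̂(1,2) = p(1,2) − c, and p̂(i,j) = p(i,j) otherwise. Then P̂ has the same hitting-time vector ĥ = h to state 1, and its mean return time satisfies μ̂₁ = μ₁ − c·h(2) < μ₁. -/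
/-- Minimum principle: if the minimum `m` of `h` over the states `j ≠ 0` were `≤ 0`, then at a
minimizer `m ≥ 1 + m * ∑ k ≠ 0, P j k ≥ 1 + m`, as the row sums are at most `1`. -/
theorem IsHittingVector.pos_of_isStochastic {n : ℕ} [NeZero n] {P : Matrix (Fin n) (Fin n) ℝ}
    {h : Fin n → ℝ} (hh : IsHittingVector P h) (hP : IsStochastic P) (j : Fin n) (hj : j ≠ 0) :
    0 < h j := by
  obtain ⟨i, hi, hmin⟩ := Finset.exists_min_image (Finset.univ.erase (0 : Fin n)) h
    ⟨j, Finset.mem_erase.2 ⟨hj, Finset.mem_univ j⟩⟩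
  refine lt_of_lt_of_le ?_ (hmin j (Finset.mem_erase.2 ⟨hj, Finset.mem_univ j⟩))
  by_contra! hneg
  have hrow : ∑ k ∈ Finset.univ.erase 0, P i k ≤ 1 := by
    rw [← hP.2 i]
    exact Finset.sum_le_sum_of_subset_of_nonneg (Finset.erase_subset _ _)
      fun k _ _ => hP.1 i k
  have hsum : (∑ k ∈ Finset.univ.erase 0, P i k) * h i
      ≤ ∑ k ∈ Finset.univ.erase 0, P i k * h k := by
    rw [Finset.sum_mul]
    exact Finset.sum_le_sum fun k hk => mul_le_mul_of_nonneg_left (hmin k hk) (hP.1 i k)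
  have heq := hh i (Finset.ne_of_mem_erase hi)
  nlinarith [mul_nonneg_of_nonpos_of_nonpos (sub_nonpos.2 hrow) hneg]

/-- The paper's Expression (8).  State space `{1, …, n}` with `n ≥ 2` is modelled as
`Fin (n+2)`; state 1 is index `0`, state 2 is index `1`.  Perturbing only row 1 by moving
mass `c ∈ (0, p(1,2)]` from column 2 to column 1 leaves the hitting-time vector of state 1
unchanged, and the mean return time to state 1 becomes `μ̂₁ = μ₁ - c·h(2) < μ₁`. -/
theorem return_time_decreases_row_one (n : ℕ)
    (P Phat : Matrix (Fin (n + 2)) (Fin (n + 2)) ℝ)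
    (h : Fin (n + 2) → ℝ) (c : ℝ) (μ₁ : ℝ)
    (hP : IsStochastic P) (hPirr : IsIrreducibleMatrix P)
    (hh : IsHittingVector P h)
    (hhuniq : ∀ g : Fin (n + 2) → ℝ, IsHittingVector P g → ∀ j, j ≠ 0 → g j = h j)
    (hμ₁ : μ₁ = 1 + ∑ k ∈ Finset.univ.erase 0, P 0 k * h k)
    (hcpos : 0 < c) (hcle : c ≤ P 0 1)
    (hPhat1 : Phat 0 0 = P 0 0 + c)
    (hPhat2 : Phat 0 1 = P 0 1 - c)
    (hPhat3 : ∀ i j, ¬(i = 0 ∧ (j = 0 ∨ j = 1)) → Phat i j = P i j) :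
    IsHittingVector Phat h ∧
      1 + ∑ k ∈ Finset.univ.erase 0, Phat 0 k * h k = μ₁ - c * h 1 ∧
      1 + ∑ k ∈ Finset.univ.erase 0, Phat 0 k * h k < μ₁ := by
  have hpos : 0 < h 1 := hh.pos_of_isStochastic hP 1 (by simp)
  have hval : 1 + ∑ k ∈ Finset.univ.erase 0, Phat 0 k * h k = μ₁ - c * h 1 := by
    have hmem : (1 : Fin (n + 2)) ∈ Finset.univ.erase 0 := by simp
    have hrest : ∑ k ∈ (Finset.univ.erase (0 : Fin (n + 2))).erase 1, Phat 0 k * h k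
        = ∑ k ∈ (Finset.univ.erase (0 : Fin (n + 2))).erase 1, P 0 k * h k := by
      refine Finset.sum_congr rfl fun k hk => ?_
      simp only [Finset.mem_erase] at hk
      rw [hPhat3 0 k (by tauto)]
    rw [hμ₁, ← Finset.add_sum_erase _ _ hmem, ← Finset.add_sum_erase _ _ hmem, hrest, hPhat2]
    ring
  refine ⟨fun j hj => ?_, hval, ?_⟩
  · rw [hh j hj]
    congr 1
    exact Finset.sum_congr rfl fun k _ => by rw [hPhat3 j k fun hjk => hj hjk.1]
  · rw [hval]
    linarith [mul_pos hcpos hpos]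
end

section
/- Let P be a row-stochastic n×n matrix on state space {1,…,n} (n ≥ 2) defining an irreducible Markov chain, with hitting-time vector h ∈ ℝ^{n−1} to state 1 (the unique solution of h(j) = 1 + Σ_{k=2}^{n} p(j,k) h(k) for j ∈ {2,…,n}) and mean return time μ₁ = 1 + Σ_{k=2}^{n} p(1,k) h(k). Fix a state j₀ ∈ {2,…,n} and c with 0 < c ≤ p(j₀,2), and let P̂ be given by p̂(j₀,1) = p(j₀,1) + c, p̂(j₀,2) = p(j₀,2) − c, and p̂(i,j) = p(i,j) otherwise. If P̂ is irreducible with hitting-time vector ĥ to state 1 and mean return time μ̂₁ = 1 + Σ_{k=2}^{n} p̂(1,k) ĥ(k), then ĥ(k) ≤ h(k) for all k ∈ {2,…,n} and μ̂₁ < μ₁. -/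
/-- Strong minimum principle: if `d ≥ m` is superharmonic at every point where it equals `m`, and
there is such a point, then `d` is constant. The set `{d = m}` is closed under transitions of
positive probability, hence everything by irreducibility. -/
lemma eq_min_of_superharmonic {n : ℕ} {Q : Matrix (Fin n) (Fin n) ℝ} (hQ : IsStochastic Q)
    (hirr : IsIrreducibleMatrix Q) {d : Fin n → ℝ} {m : ℝ} (hm : ∀ i, m ≤ d i)
    (hd : ∀ i, d i = m → ∑ k, Q i k * d k ≤ d i) {i₀ : Fin n} (hi₀ : d i₀ = m) (j : Fin n) :
    d j = m := by
  have step : ∀ i k, d i = m → 0 < Q i k → d k = m := by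
    intro i k hi hk
    have hnn : ∀ l ∈ Finset.univ, 0 ≤ Q i l * (d l - m) := fun l _ =>
      mul_nonneg (hQ.1 i l) (sub_nonneg.2 (hm l))
    have hsum : ∑ l, Q i l * (d l - m) ≤ 0 := by
      have := hd i hi
      simp only [mul_sub, Finset.sum_sub_distrib, ← Finset.sum_mul, hQ.2 i]
      linarith
    have h0 := (Finset.sum_eq_zero_iff_of_nonneg hnn).1
      (le_antisymm hsum (Finset.sum_nonneg hnn)) k (Finset.mem_univ k)
    rcases mul_eq_zero.1 h0 with h1 | h1 <;> linarith
  have pow : ∀ (t : ℕ) (k : Fin n), (Q ^ t) i₀ k ≠ 0 → d k = m := by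
    intro t
    induction t with
    | zero =>
      intro k hk
      by_cases hik : i₀ = k
      · rwa [← hik]
      · simp [Matrix.one_apply, hik] at hk
    | succ t ih =>
      intro k hk
      rw [pow_succ, Matrix.mul_apply] at hk
      obtain ⟨l, -, hl⟩ := Finset.exists_ne_zero_of_sum_ne_zero hk
      exact step l k (ih l (left_ne_zero_of_mul hl))
        (lt_of_le_of_ne (hQ.1 l k) (right_ne_zero_of_mul hl).symm)
  obtain ⟨t, -, ht⟩ := hirr i₀ j
  exact pow t j ht.ne'

/-- Weak minimum principle: a function vanishing at `0` and superharmonic elsewhere is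
nonnegative. -/
lemma nonneg_of_superharmonic {n : ℕ} [NeZero n] {Q : Matrix (Fin n) (Fin n) ℝ}
    (hQ : IsStochastic Q) (hirr : IsIrreducibleMatrix Q) {d : Fin n → ℝ} (h0 : d 0 = 0)
    (hd : ∀ i, i ≠ 0 → ∑ k, Q i k * d k ≤ d i) (j : Fin n) : 0 ≤ d j := by
  obtain ⟨i₀, hi₀⟩ := Finite.exists_min d
  by_contra! hj
  have hneg : d i₀ < 0 := (hi₀ j).trans_lt hj
  -- A negative minimum is not attained at `0`, so superharmonicity holds wherever it is attained.
  have := eq_min_of_superharmonic hQ hirr hi₀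
    (fun i hi => hd i (by rintro rfl; linarith)) rfl 0
  linarith

lemma sum_erase_zero_eq {n : ℕ} [NeZero n] (q h : Fin n → ℝ) :
    ∑ k ∈ Finset.univ.erase 0, q k * h k = ∑ k, q k * Function.update h 0 0 k := by
  rw [← Finset.add_sum_erase _ _ (Finset.mem_univ (0 : Fin n))]
  simp only [Function.update_self, mul_zero, zero_add]
  refine Finset.sum_congr rfl fun k hk => ?_
  rw [Function.update_of_ne (Finset.ne_of_mem_erase hk)]

/-- The paper's Expression (9).  State space `{1, …, n}` with `n ≥ 2` is modelled as
`Fin (n+2)`; state 1 is index `0`, state 2 is index `1`.  Perturbing a single row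
`j₀ ≥ 2` by moving mass `c ∈ (0, p(j₀,2)]` from column 2 to column 1 weakly decreases
every mean hitting time of state 1 and strictly decreases the mean return time to
state 1. -/
theorem return_time_decreases_row_j (n : ℕ)
    (P Phat : Matrix (Fin (n + 2)) (Fin (n + 2)) ℝ)
    (h hhat : Fin (n + 2) → ℝ) (j₀ : Fin (n + 2)) (c : ℝ)
    (hP : IsStochastic P) (hPirr : IsIrreducibleMatrix P)
    (hh : IsHittingVector P h)
    (hhuniq : ∀ g : Fin (n + 2) → ℝ, IsHittingVector P g → ∀ j, j ≠ 0 → g j = h j)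
    (hj₀ : j₀ ≠ 0)
    (hcpos : 0 < c) (hcle : c ≤ P j₀ 1)
    (hPhat1 : Phat j₀ 0 = P j₀ 0 + c)
    (hPhat2 : Phat j₀ 1 = P j₀ 1 - c)
    (hPhat3 : ∀ i j, ¬(i = j₀ ∧ (j = 0 ∨ j = 1)) → Phat i j = P i j)
    (hPhatirr : IsIrreducibleMatrix Phat)
    (hhhat : IsHittingVector Phat hhat)
    (hhhatuniq : ∀ g : Fin (n + 2) → ℝ, IsHittingVector Phat g → ∀ j, j ≠ 0 → g j = hhat j) :
    (∀ k, k ≠ 0 → hhat k ≤ h k) ∧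
      1 + ∑ k ∈ Finset.univ.erase 0, Phat 0 k * hhat k
        < 1 + ∑ k ∈ Finset.univ.erase 0, P 0 k * h k := by
  have h10 : (1 : Fin (n + 2)) ≠ 0 := by simp
  have hent : ∀ i j, Phat i j = P i j +
      if i = j₀ then (if j = 0 then c else 0) - (if j = 1 then c else 0) else 0 := by
    intro i j
    by_cases hi : i = j₀
    · subst hi
      by_cases hj0 : j = 0
      · subst hj0; simp [hPhat1, h10.symm]
      by_cases hj1 : j = 1
      · subst hj1; simp [hPhat2, sub_eq_add_neg]
      simp [hj0, hj1, hPhat3 i j (by tauto)]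
    · simp [hi, hPhat3 i j (by tauto)]
  have hrow : ∀ i (f : Fin (n + 2) → ℝ), ∑ k, Phat i k * f k =
      ∑ k, P i k * f k + if i = j₀ then c * f 0 - c * f 1 else 0 := by
    intro i f
    by_cases hi : i = j₀
    · simp [hent, hi, add_mul, sub_mul, Finset.sum_add_distrib, Finset.sum_sub_distrib, ite_mul]
    · simp [hent, hi]
  have hPhat : IsStochastic Phat := by
    refine ⟨fun i j => ?_, fun i => ?_⟩
    · by_cases hij : i = j₀ ∧ (j = 0 ∨ j = 1)
      · obtain ⟨rfl, rfl | rfl⟩ := hij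
        · rw [hPhat1]; linarith [hP.1 i 0]
        · rw [hPhat2]; linarith
      · rw [hPhat3 i j hij]; exact hP.1 i j
    · have := hrow i (fun _ => 1)
      simpa [hP.2 i] using this
  simp only [IsHittingVector, sum_erase_zero_eq] at hh hhhat ⊢
  set x := Function.update h 0 0 with hx
  set y := Function.update hhat 0 0 with hy
  have hx0 : x 0 = 0 := by simp [hx]
  have hy0 : y 0 = 0 := by simp [hy]
  have hxk : ∀ k, k ≠ 0 → x k = h k := fun k hk => by simp [hx, hk]
  have hyk : ∀ k, k ≠ 0 → y k = hhat k := fun k hk => by simp [hy, hk]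
  have hxnn : ∀ k, 0 ≤ x k := nonneg_of_superharmonic hP hPirr hx0 fun i hi => by
    rw [hxk i hi, hh i hi]; linarith
  have hx1 : 0 < x 1 := by
    have : 0 ≤ ∑ k, P 1 k * x k := Finset.sum_nonneg fun k _ => mul_nonneg (hP.1 1 k) (hxnn k)
    rw [hxk 1 h10, hh 1 h10]; linarith
  have hcx : 0 < c * x 1 := mul_pos hcpos hx1
  let d : Fin (n + 2) → ℝ := fun k => x k - y k
  have hd0 : d 0 = 0 := by simp [d, hx0, hy0]
  have hPd : ∀ i, ∑ k, Phat i k * d k = ∑ k, Phat i k * x k - ∑ k, Phat i k * y k := fun i => by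
    simp only [d, mul_sub, Finset.sum_sub_distrib]
  have hd : ∀ i, i ≠ 0 → d i = ∑ k, Phat i k * d k + if i = j₀ then c * x 1 else 0 := by
    intro i hi
    rw [hPd, hrow i x, hx0]
    simp only [d]
    rw [hxk i hi, hyk i hi, hh i hi, hhhat i hi]
    split_ifs <;> ring
  have hsuper : ∀ i, i ≠ 0 → ∑ k, Phat i k * d k ≤ d i := by
    intro i hi
    rw [hd i hi]
    split_ifs <;> linarith
  have hdnn := nonneg_of_superharmonic hPhat hPhatirr hd0 hsuper
  have hPdnn : ∀ i, 0 ≤ ∑ k, Phat i k * d k := fun i =>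
    Finset.sum_nonneg fun k _ => mul_nonneg (hPhat.1 i k) (hdnn k)
  refine ⟨fun k hk => ?_, ?_⟩
  · have := hdnn k
    simp only [d] at this
    rw [hxk k hk, hyk k hk] at this
    linarith
  · have hrow0 := hrow 0 x
    rw [if_neg hj₀.symm, add_zero] at hrow0
    by_contra! hle
    have h0 : ∑ k, Phat 0 k * d k ≤ d 0 := by rw [hPd, hd0]; linarith
    have hz : d j₀ = 0 := eq_min_of_superharmonic hPhat hPhatirr hdnn
      (fun i _ => if hi : i = 0 then hi ▸ h0 else hsuper i hi) hd0 j₀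
    have h1 := hd j₀ hj₀
    rw [if_pos rfl] at h1
    linarith [hPdnn j₀]
end
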